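/- Maximum principle, homogeneous case: let κ > 0, α ∈ (0,1], q ∈ [2,∞), and let θ be a regular solution of θ_t + u·∇θ + κ(−Δ)^α θ = 0 with u = (−R₂θ, R₁θ). Then for every t ≥ 0 one has ‖θ(t)‖_{L^q(ℝ²)} ≤ ‖θ(0)‖_{L^q(ℝ²)}. -/

import Mathlib

/-!
The function `F t = ∫ |θ t| ^ q` is nonincreasing, because
`F' = q ∫ |θ| ^ (q - 2) θ θ_t = -∫ u · ∇ |θ| ^ q - κ q ∫ |θ| ^ (q - 2) θ (-Δ)^α θ ≤ 0`
(`integral_dualPow_mul_nonpos`). Differentiation under the integral sign rests on the uniform decay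
of a continuous curve in the Schwartz space over compact time intervals (`exists_uniform_decay`).

The transport term vanishes since `div u = 0`. The velocity is never differentiated: by
self-adjointness of `𝓕⁻¹` (`integral_FT2inv_re_mul`) the Riesz symbols and the symbols of the
derivatives of `|θ| ^ q` meet on the Fourier side, where they cancel (`integral_riesz_transport`).

The dissipation term is nonnegative by a translation argument. With `P = |θ| ^ (q - 2) θ`, Young's
inequality and translation invariance give `∫ θ(x + y) P(x) dx ≤ ∫ θ P` for every shift `y`.
In terms of `K = Re (𝓕 θ · 𝓕⁻¹ P)` this says that `∫ (1 - cos (2π⟨ξ, y⟩)) K(ξ) dξ ≥ 0`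
(`integral_one_sub_cos_nonneg`). For `α < 1` the symbol `‖ξ‖ ^ (2α)` is a positive multiple of
`∫ (1 - cos ⟨ξ, y⟩) ‖y‖ ^ (-(2 + 2α)) dy` by scaling and reflection invariance (`levy_eq`), so Fubini
yields `∫ ‖2πξ‖ ^ (2α) K(ξ) dξ ≥ 0`; the case `α = 1` is a limit of the cases `α < 1`
(`integral_rpow_pairDensity_nonneg`).
-/


open MeasureTheory Real Set
open scoped RealInnerProductSpace

noncomputable section

/-- The Fourier transform of a (complex-valued) function on `ℝ²`. -/
def FT2 (φ : EuclideanSpace ℝ (Fin 2) → ℂ) (ξ : EuclideanSpace ℝ (Fin 2)) : ℂ :=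
  ∫ x : EuclideanSpace ℝ (Fin 2), Complex.exp (-2 * (π : ℂ) * Complex.I * (⟪x, ξ⟫ : ℝ)) * φ x

/-- The inverse Fourier transform of a (complex-valued) function on `ℝ²`. -/
def FT2inv (φ : EuclideanSpace ℝ (Fin 2) → ℂ) (x : EuclideanSpace ℝ (Fin 2)) : ℂ :=
  ∫ ξ : EuclideanSpace ℝ (Fin 2), Complex.exp (2 * (π : ℂ) * Complex.I * (⟪ξ, x⟫ : ℝ)) * φ ξ

/-- Fractional Laplacian `(-Δ)^α φ` of a real-valued function on `ℝ²`,
defined via the Fourier multiplier `(2π‖ξ‖)^(2α)`. -/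
def fracLap (α : ℝ) (φ : EuclideanSpace ℝ (Fin 2) → ℝ) (x : EuclideanSpace ℝ (Fin 2)) : ℝ :=
  (FT2inv (fun ξ => (((2 * π * ‖ξ‖) ^ (2 * α) : ℝ) : ℂ) * FT2 (fun y => (φ y : ℂ)) ξ) x).re

/-- Riesz transform `R_j φ` of a real-valued function on `ℝ²`,
defined via the Fourier multiplier `-i ξ_j/‖ξ‖`. -/
def riesz (j : Fin 2) (φ : EuclideanSpace ℝ (Fin 2) → ℝ) (x : EuclideanSpace ℝ (Fin 2)) : ℝ :=
  (FT2inv (fun ξ => (-Complex.I * ((ξ j : ℝ) : ℂ) / ((‖ξ‖ : ℝ) : ℂ)) *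
      FT2 (fun y => (φ y : ℂ)) ξ) x).re

local notation "E2" => EuclideanSpace ℝ (Fin 2)

open scoped FourierTransform SchwartzMap Topology

/-! ### Fourier multipliers paired with integrable functions -/

lemma FT2_eq_fourier (f : E2 → ℂ) : FT2 f = 𝓕 f := by
  ext ξ
  rw [Real.fourier_eq']
  simp only [FT2, smul_eq_mul]
  congr! 4
  push_cast; ring

lemma FT2inv_eq_fourierInv (f : E2 → ℂ) : FT2inv f = 𝓕⁻ f := by
  ext ξ
  rw [Real.fourierInv_eq']
  simp only [FT2inv, smul_eq_mul]
  congr! 4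
  push_cast; ring

lemma norm_FT2inv_le (f : E2 → ℂ) (x : E2) : ‖FT2inv f x‖ ≤ ∫ ξ, ‖f ξ‖ := by
  rw [FT2inv_eq_fourierInv]
  exact VectorFourier.norm_fourierIntegral_le_integral_norm _ _ _ _ _

lemma continuous_FT2inv {f : E2 → ℂ} (hf : Integrable f) : Continuous (FT2inv f) := by
  rw [FT2inv_eq_fourierInv]
  refine VectorFourier.fourierIntegral_continuous Real.continuous_fourierChar ?_ hf
  simp only [LinearMap.neg_apply, innerₗ_apply_apply]
  fun_prop

/-- Self-adjointness of the inverse Fourier transform, in the form needed to pair a real Fourier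
multiplier operator with an integrable real function. -/
lemma integral_FT2inv_re_mul {h : E2 → ℂ} {P : E2 → ℝ} (hh : Integrable h) (hP : Integrable P) :
    ∫ x, (FT2inv h x).re * P x = ∫ ξ, (h ξ * FT2inv (fun x => (P x : ℂ)) ξ).re := by
  have hPc : Integrable (fun x => (P x : ℂ)) := hP.ofReal
  have hL : Continuous fun p : E2 × E2 ↦ (-innerₗ E2) p.1 p.2 := by
    simp only [LinearMap.neg_apply, innerₗ_apply_apply]
    fun_prop
  have key : ∫ x, FT2inv h x * (P x : ℂ) = ∫ ξ, h ξ * FT2inv (fun x => (P x : ℂ)) ξ := by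
    have := VectorFourier.integral_fourierIntegral_smul_eq_flip
      (μ := (volume : Measure E2)) (ν := (volume : Measure E2)) (L := -innerₗ E2)
      Real.continuous_fourierChar hL hh hPc
    have hflip : (-innerₗ E2).flip = -innerₗ E2 := by
      ext x y; simp [real_inner_comm]
    rw [hflip] at this
    rw [FT2inv_eq_fourierInv, FT2inv_eq_fourierInv]
    exact this
  have i1 : Integrable (fun x => FT2inv h x * (P x : ℂ)) :=
    hPc.bdd_mul (continuous_FT2inv hh).aestronglyMeasurable
      (Filter.Eventually.of_forall (norm_FT2inv_le h))
  have i2 : Integrable (fun ξ => h ξ * FT2inv (fun x => (P x : ℂ)) ξ) :=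
    hh.mul_bdd (c := ∫ x, ‖(P x : ℂ)‖) (continuous_FT2inv hPc).aestronglyMeasurable
      (Filter.Eventually.of_forall (norm_FT2inv_le _))
  have := congrArg Complex.re key
  rw [← RCLike.re_eq_complex_re, ← integral_re i1, ← integral_re i2] at this
  simpa using this

/-- The complex-valued Schwartz function `𝓕 φ`. -/
def hat (φ : 𝓢(E2, ℝ)) : 𝓢(E2, ℂ) := 𝓕 (SchwartzMap.postcompCLM Complex.ofRealCLM φ)

lemma FT2_eq_hat (φ : 𝓢(E2, ℝ)) : FT2 (fun y => (φ y : ℂ)) = hat φ := by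
  rw [FT2_eq_fourier, hat, SchwartzMap.fourier_coe]
  rfl

lemma FT2inv_hat (φ : 𝓢(E2, ℝ)) (x : E2) : FT2inv (hat φ) x = φ x := by
  rw [FT2inv_eq_fourierInv, ← SchwartzMap.fourierInv_coe, hat, FourierTransform.fourierInv_fourier_eq]
  rfl

/-! ### Riesz and fractional symbols, and the transport term -/

lemma integrable_rieszSymbol_mul_hat (j : Fin 2) (φ : 𝓢(E2, ℝ)) :
    Integrable (fun ξ : E2 => (-Complex.I * ((ξ j : ℝ) : ℂ) / ((‖ξ‖ : ℝ) : ℂ)) * hat φ ξ) := by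
  refine (hat φ).integrable.bdd_mul (c := 1) ?_ (Filter.Eventually.of_forall fun ξ => ?_)
  · exact Measurable.aestronglyMeasurable (by fun_prop)
  · have := PiLp.norm_apply_le ξ j
    simp only [norm_div, norm_mul, norm_neg, Complex.norm_I, one_mul, Complex.norm_real, norm_norm]
    exact div_le_one_of_le₀ this (norm_nonneg _)

lemma rpow_le_one_add_sq {a r : ℝ} (ha : 0 ≤ a) (hr0 : 0 ≤ r) (hr : r ≤ 2) : a ^ r ≤ 1 + a ^ 2 := by
  rcases le_total a 1 with h | h
  · have := Real.rpow_le_one ha h hr0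
    nlinarith [sq_nonneg a]
  · have := Real.rpow_le_rpow_of_exponent_le h hr
    rw [Real.rpow_two] at this
    linarith

lemma integrable_weight_norm_hat (φ : 𝓢(E2, ℝ)) :
    Integrable (fun ξ : E2 => (1 + (2 * π * ‖ξ‖) ^ 2) * ‖hat φ ξ‖) := by
  have h0 := (hat φ).integrable (μ := volume)
  have h2 := (hat φ).integrable_pow_mul volume 2
  refine (h0.norm.add (h2.const_mul ((2 * π) ^ 2))).congr (Filter.Eventually.of_forall fun ξ => ?_)
  simp only [Pi.add_apply]
  ring

lemma integrable_fracSymbol_mul_hat {α : ℝ} (hα : α ∈ Ioc (0 : ℝ) 1) (φ : 𝓢(E2, ℝ)) :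
    Integrable (fun ξ : E2 => (((2 * π * ‖ξ‖) ^ (2 * α) : ℝ) : ℂ) * hat φ ξ) := by
  refine (integrable_weight_norm_hat φ).mono' ?_ (Filter.Eventually.of_forall fun ξ => ?_)
  · have : Measurable (hat φ) := (hat φ).continuous.measurable
    exact Measurable.aestronglyMeasurable (by fun_prop)
  · have h0 : 0 ≤ 2 * π * ‖ξ‖ := by positivity
    rw [norm_mul, Complex.norm_real, Real.norm_of_nonneg (by positivity)]
    gcongr
    exact rpow_le_one_add_sq h0 (by linarith [hα.1]) (by linarith [hα.2])

lemma FT2inv_fderiv {G : E2 → ℝ} (hG : Integrable G) (hGd : Differentiable ℝ G)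
    (hG' : Integrable (fderiv ℝ G)) (j : Fin 2) (ξ : E2) :
    FT2inv (fun x => ((fderiv ℝ G x (EuclideanSpace.single j 1) : ℝ) : ℂ)) ξ
      = -(2 * π * Complex.I * (ξ j : ℝ)) * FT2inv (fun x => (G x : ℂ)) ξ := by
  set f : E2 → ℂ := fun x => (G x : ℂ) with hf
  have hfd : ∀ x, HasFDerivAt f (Complex.ofRealCLM ∘L fderiv ℝ G x) x := fun x =>
    Complex.ofRealCLM.hasFDerivAt.comp x (hGd x).hasFDerivAt
  have hfd' : fderiv ℝ f = fun x => Complex.ofRealCLM ∘L fderiv ℝ G x :=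
    funext fun x => (hfd x).fderiv
  have hi : Integrable (fderiv ℝ f) := by
    rw [hfd']
    exact ((ContinuousLinearMap.compL ℝ E2 ℝ ℂ) Complex.ofRealCLM).integrable_comp hG'
  have h1 := Real.fourier_fderiv (f := f) hG.ofReal (fun x => (hfd x).differentiableAt) hi
  have h2 := congrArg (fun L => L (EuclideanSpace.single j (1 : ℝ))) (congrFun h1 (-ξ))
  rw [Real.fourier_continuousLinearMap_apply hi] at h2
  rw [FT2inv_eq_fourierInv, FT2inv_eq_fourierInv, Real.fourierInv_eq_fourier_neg,
    Real.fourierInv_eq_fourier_neg]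
  have h3 : (fun x => fderiv ℝ f x (EuclideanSpace.single j (1 : ℝ)))
      = fun x => ((fderiv ℝ G x (EuclideanSpace.single j 1) : ℝ) : ℂ) := by
    rw [hfd']; rfl
  rw [h3] at h2
  rw [h2]
  have h4 : innerSL ℝ ξ (EuclideanSpace.single j 1) = ξ j := by
    change ⟪ξ, EuclideanSpace.single j (1 : ℝ)⟫ = ξ j
    simp [EuclideanSpace.inner_single_right]
  simp [VectorFourier.fourierSMulRight_apply, h4]
  ring

/-- The velocity `(-R₂φ, R₁φ)` is divergence free: it integrates to zero against gradients. -/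
lemma integral_riesz_transport (φ : 𝓢(E2, ℝ)) {G : E2 → ℝ} (hG : Integrable G)
    (hGd : Differentiable ℝ G) (hG' : Integrable (fderiv ℝ G)) :
    ∫ x, riesz 1 φ x * fderiv ℝ G x (EuclideanSpace.single 0 1)
      = ∫ x, riesz 0 φ x * fderiv ℝ G x (EuclideanSpace.single 1 1) := by
  have hP : ∀ j : Fin 2, Integrable fun x => fderiv ℝ G x (EuclideanSpace.single j 1) :=
    fun j => hG'.apply_continuousLinearMap _
  simp only [riesz, FT2_eq_hat]
  rw [integral_FT2inv_re_mul (integrable_rieszSymbol_mul_hat 1 φ) (hP 0),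
    integral_FT2inv_re_mul (integrable_rieszSymbol_mul_hat 0 φ) (hP 1)]
  congr 1
  ext ξ
  rw [FT2inv_fderiv hG hGd hG', FT2inv_fderiv hG hGd hG']
  congr 1
  ring

lemma continuous_riesz (j : Fin 2) (φ : 𝓢(E2, ℝ)) : Continuous (riesz j φ) := by
  unfold riesz
  rw [FT2_eq_hat]
  exact Complex.continuous_re.comp (continuous_FT2inv (integrable_rieszSymbol_mul_hat j φ))

lemma exists_bound_riesz (j : Fin 2) (φ : 𝓢(E2, ℝ)) : ∃ C, ∀ x, ‖riesz j φ x‖ ≤ C :=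
  ⟨_, fun x => (Complex.abs_re_le_norm _).trans (norm_FT2inv_le _ x)⟩

lemma continuous_fracLap {α : ℝ} (hα : α ∈ Ioc (0 : ℝ) 1) (φ : 𝓢(E2, ℝ)) :
    Continuous (fracLap α φ) := by
  unfold fracLap
  rw [FT2_eq_hat]
  exact Complex.continuous_re.comp (continuous_FT2inv (integrable_fracSymbol_mul_hat hα φ))

lemma exists_bound_fracLap (α : ℝ) (φ : 𝓢(E2, ℝ)) : ∃ C, ∀ x, ‖fracLap α φ x‖ ≤ C :=
  ⟨_, fun x => (Complex.abs_re_le_norm _).trans (norm_FT2inv_le _ x)⟩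

/-! ### Lévy–Khintchine representation of `‖ξ‖ ^ (2α)` -/

/-- The Lévy kernel `‖y‖ ^ (-(2 + 2α))` of `(-Δ)^α` on `ℝ²` weighted by `min 1 ‖y‖²`: up to a factor
depending on `ξ`, an integrable majorant of `(1 - cos ⟨ξ, y⟩) ‖y‖ ^ (-(2 + 2α))`. -/
def levyMaj (α : ℝ) (y : E2) : ℝ := min 1 (‖y‖ ^ 2) * ‖y‖ ^ (-(2 + 2 * α))

lemma levyMaj_nonneg (α : ℝ) (y : E2) : 0 ≤ levyMaj α y := by
  unfold levyMaj; positivity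

lemma integrable_levyMaj {α : ℝ} (hα : α ∈ Ioo (0 : ℝ) 1) : Integrable (levyMaj α) := by
  have := (integrable_fun_norm_addHaar (volume : Measure E2)
    (f := fun r : ℝ => min 1 (r ^ 2) * r ^ (-(2 + 2 * α)))).2
  refine this ?_
  rw [finrank_euclideanSpace_fin, ← Ioc_union_Ioi_eq_Ioi zero_le_one]
  refine IntegrableOn.union ?_ ?_
  · have h := (intervalIntegral.intervalIntegrable_rpow' (a := 0) (b := 1) (r := 1 - 2 * α)
      (by linarith [hα.2])).1
    refine h.congr_fun (fun r hr => ?_) measurableSet_Ioc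
    have hr0 : 0 < r := hr.1
    have : min 1 (r ^ 2) = r ^ 2 := min_eq_right (by have := hr.2; nlinarith)
    simp only [this, smul_eq_mul, Nat.add_one_sub_one, pow_one]
    rw [← Real.rpow_two, ← mul_assoc]
    nth_rewrite 2 [← Real.rpow_one r]
    rw [← Real.rpow_add hr0, ← Real.rpow_add hr0]
    congr 1; ring
  · have h := integrableOn_Ioi_rpow_of_lt (a := -1 - 2 * α) (c := 1) (by linarith [hα.1]) one_pos
    refine h.congr_fun (fun r hr => ?_) measurableSet_Ioi
    have hr1 : 1 < r := hr
    have hr0 : 0 < r := by linarith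
    have : min 1 (r ^ 2) = 1 := min_eq_left (by nlinarith)
    simp only [this, smul_eq_mul, Nat.add_one_sub_one, pow_one, one_mul]
    nth_rewrite 2 [← Real.rpow_one r]
    rw [← Real.rpow_add hr0]
    congr 1; ring

lemma one_sub_cos_inner_le (ξ y : E2) :
    1 - Real.cos ⟪ξ, y⟫ ≤ (2 + ‖ξ‖ ^ 2) * min 1 (‖y‖ ^ 2) := by
  have h1 : 1 - Real.cos ⟪ξ, y⟫ ≤ 2 := by linarith [Real.neg_one_le_cos ⟪ξ, y⟫]
  have h2 : 1 - Real.cos ⟪ξ, y⟫ ≤ ‖ξ‖ ^ 2 * ‖y‖ ^ 2 := by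
    have a := Real.one_sub_sq_div_two_le_cos (x := ⟪ξ, y⟫)
    have b : ⟪ξ, y⟫ ^ 2 ≤ (‖ξ‖ * ‖y‖) ^ 2 := sq_le_sq' 
      (by linarith [neg_le_of_abs_le (abs_real_inner_le_norm ξ y)]) (real_inner_le_norm ξ y)
    rw [mul_pow] at b
    nlinarith [sq_nonneg ⟪ξ, y⟫]
  rcases le_total 1 (‖y‖ ^ 2) with h | h
  · rw [min_eq_left h]; nlinarith [sq_nonneg ‖ξ‖]
  · rw [min_eq_right h]; nlinarith [sq_nonneg ‖y‖]

lemma norm_levyIntegrand_le (α : ℝ) (ξ y : E2) :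
    ‖(1 - Real.cos ⟪ξ, y⟫) * ‖y‖ ^ (-(2 + 2 * α))‖ ≤ (2 + ‖ξ‖ ^ 2) * levyMaj α y := by
  have h0 : 0 ≤ 1 - Real.cos ⟪ξ, y⟫ := by linarith [Real.cos_le_one ⟪ξ, y⟫]
  rw [Real.norm_of_nonneg (by positivity), levyMaj, ← mul_assoc]
  gcongr
  exact one_sub_cos_inner_le ξ y

/-- The Lévy–Khintchine integral `∫ (1 - cos ⟨ξ, y⟩) ‖y‖ ^ (-(2 + 2α)) dy`, which is a positive
multiple of `‖ξ‖ ^ (2α)` for `0 < α < 1`. -/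
def levy (α : ℝ) (ξ : E2) : ℝ := ∫ y : E2, (1 - Real.cos ⟪ξ, y⟫) * ‖y‖ ^ (-(2 + 2 * α))

lemma integrable_levyIntegrand {α : ℝ} (hα : α ∈ Ioo (0 : ℝ) 1) (ξ : E2) :
    Integrable fun y : E2 => (1 - Real.cos ⟪ξ, y⟫) * ‖y‖ ^ (-(2 + 2 * α)) := by
  refine ((integrable_levyMaj hα).const_mul (2 + ‖ξ‖ ^ 2)).mono' ?_
    (Filter.Eventually.of_forall (norm_levyIntegrand_le α ξ))
  exact Measurable.aestronglyMeasurable (by fun_prop)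

lemma levy_smul (α : ℝ) {r : ℝ} (hr : 0 < r) (ξ : E2) :
    levy α (r • ξ) = r ^ (2 * α) * levy α ξ := by
  have h := Measure.integral_comp_smul (volume : Measure E2)
    (fun y => (1 - Real.cos ⟪ξ, y⟫) * ‖y‖ ^ (-(2 + 2 * α))) r
  rw [finrank_euclideanSpace_fin] at h
  have h2 : ∀ y : E2, (1 - Real.cos ⟪ξ, r • y⟫) * ‖r • y‖ ^ (-(2 + 2 * α))
      = r ^ (-(2 + 2 * α)) * ((1 - Real.cos ⟪r • ξ, y⟫) * ‖y‖ ^ (-(2 + 2 * α))) := by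
    intro y
    rw [norm_smul, Real.norm_of_nonneg hr.le, Real.mul_rpow hr.le (norm_nonneg y),
      real_inner_smul_left, real_inner_smul_right]
    ring
  simp only [h2] at h
  rw [integral_const_mul, abs_of_nonneg (by positivity), smul_eq_mul] at h
  change r ^ (-(2 + 2 * α)) * levy α (r • ξ) = (r ^ 2)⁻¹ * levy α ξ at h
  have hm : r ^ (-(2 + 2 * α)) = (r ^ 2)⁻¹ * (r ^ (2 * α))⁻¹ := by
    rw [Real.rpow_neg hr.le, Real.rpow_add hr, Real.rpow_two, mul_inv]
  rw [hm] at h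
  have : 0 < r ^ (2 * α) := by positivity
  field_simp at h
  linarith

lemma levy_eq_of_norm_eq (α : ℝ) {ξ η : E2} (h : ‖ξ‖ = ‖η‖) : levy α ξ = levy α η := by
  -- a reflection maps `ξ` to `η` and preserves both norms and Lebesgue measure
  set A : E2 ≃ₗᵢ[ℝ] E2 := ((ℝ ∙ (ξ - η))ᗮ).reflection
  have hA : A ξ = η := Submodule.reflection_sub h
  have := A.measurePreserving.integral_comp A.toHomeomorph.measurableEmbedding
    (fun y => (1 - Real.cos ⟪η, y⟫) * ‖y‖ ^ (-(2 + 2 * α)))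
  rw [levy, levy, ← this]
  congr 1; ext y
  rw [A.norm_map, ← hA, A.inner_map_map]

lemma levy_single_pos {α : ℝ} (hα : α ∈ Ioo (0 : ℝ) 1) :
    0 < levy α (EuclideanSpace.single 0 1) := by
  set e : E2 := EuclideanSpace.single 0 1
  have he : ‖e‖ = 1 := by simp [e]
  rw [levy, integral_pos_iff_support_of_nonneg _ (integrable_levyIntegrand hα e)]
  · have hU : IsOpen {y : E2 | Real.cos ⟪e, y⟫ < 1} := isOpen_lt (by fun_prop) (by fun_prop)
    refine lt_of_lt_of_le (hU.measure_pos volume ⟨e, ?_⟩) (measure_mono fun y hy => ?_)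
    · simp only [mem_ofPred_eq, real_inner_self_eq_norm_sq, he, one_pow]
      exact Real.cos_one_le.trans_lt (by norm_num)
    · have hy' : Real.cos ⟪e, y⟫ < 1 := hy
      have h0 : 0 < ‖y‖ := by
        rw [norm_pos_iff]
        rintro rfl
        simp at hy'
      have h1 : 0 < 1 - Real.cos ⟪e, y⟫ := by linarith
      exact (mul_pos h1 (Real.rpow_pos_of_pos h0 _)).ne'
  · intro y
    have : 0 ≤ 1 - Real.cos ⟪e, y⟫ := by linarith [Real.cos_le_one ⟪e, y⟫]
    change 0 ≤ (1 - Real.cos ⟪e, y⟫) * ‖y‖ ^ (-(2 + 2 * α))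
    positivity

lemma levy_eq {α : ℝ} (hα : α ∈ Ioo (0 : ℝ) 1) (ξ : E2) :
    levy α ξ = ‖ξ‖ ^ (2 * α) * levy α (EuclideanSpace.single 0 1) := by
  rcases eq_or_ne ξ 0 with rfl | h
  · rw [norm_zero, Real.zero_rpow (by linarith [hα.1])]
    simp [levy]
  · rw [← levy_smul α (norm_pos_iff.2 h)]
    apply levy_eq_of_norm_eq
    simp [norm_smul]

/-! ### Positivity of the fractional Laplacian -/

lemma FT2inv_modulate (h : E2 → ℂ) (x y : E2) :
    FT2inv (fun ξ => Complex.exp (2 * (π : ℂ) * Complex.I * (⟪ξ, y⟫ : ℝ)) * h ξ) x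
      = FT2inv h (x + y) := by
  unfold FT2inv
  congr 1; ext ξ
  rw [← mul_assoc, ← Complex.exp_add, inner_add_right]
  congr 2
  push_cast; ring

/-- The spectral density of the pairing `⟨φ, P⟩`: the real part of `𝓕 φ · 𝓕⁻¹ P`. -/
def pairDensity (φ : 𝓢(E2, ℝ)) (P : E2 → ℝ) (ξ : E2) : ℝ :=
  (hat φ ξ * FT2inv (fun x => (P x : ℂ)) ξ).re

lemma continuous_pairDensity (φ : 𝓢(E2, ℝ)) {P : E2 → ℝ} (hP : Integrable P) :
    Continuous (pairDensity φ P) := by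
  have := continuous_FT2inv (hP.ofReal (𝕜 := ℂ))
  have h2 := (hat φ).continuous
  exact Complex.continuous_re.comp (h2.mul this)

lemma abs_pairDensity_le (φ : 𝓢(E2, ℝ)) (P : E2 → ℝ) (ξ : E2) :
    ‖pairDensity φ P ξ‖ ≤ ‖hat φ ξ‖ * ∫ x, ‖(P x : ℂ)‖ := by
  refine (Complex.abs_re_le_norm _).trans ?_
  rw [norm_mul]
  gcongr
  exact norm_FT2inv_le _ ξ

lemma integrable_weight_pairDensity (φ : 𝓢(E2, ℝ)) {P : E2 → ℝ} (hP : Integrable P) :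
    Integrable fun ξ : E2 => (1 + (2 * π * ‖ξ‖) ^ 2) * ‖pairDensity φ P ξ‖ := by
  refine ((integrable_weight_norm_hat φ).mul_const (∫ x, ‖(P x : ℂ)‖)).mono' ?_
    (Filter.Eventually.of_forall fun ξ => ?_)
  · have := continuous_pairDensity φ hP
    exact Continuous.aestronglyMeasurable (by fun_prop)
  · rw [norm_mul, norm_norm, Real.norm_of_nonneg (by positivity), mul_assoc (1 + _)]
    gcongr
    exact abs_pairDensity_le φ P ξ

lemma integrable_pairDensity (φ : 𝓢(E2, ℝ)) {P : E2 → ℝ} (hP : Integrable P) :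
    Integrable (pairDensity φ P) := by
  refine (integrable_weight_pairDensity φ hP).mono'
    (continuous_pairDensity φ hP).aestronglyMeasurable (Filter.Eventually.of_forall fun ξ => ?_)
  nlinarith [norm_nonneg (pairDensity φ P ξ),
    mul_nonneg (sq_nonneg (2 * π * ‖ξ‖)) (norm_nonneg (pairDensity φ P ξ))]

lemma integral_translate_mul (φ : 𝓢(E2, ℝ)) {P : E2 → ℝ} (hP : Integrable P) (y : E2) :
    ∫ x, φ (x + y) * P x = ∫ ξ : E2, (Complex.exp (2 * (π : ℂ) * Complex.I * (⟪ξ, y⟫ : ℝ)) *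
      (hat φ ξ * FT2inv (fun x => (P x : ℂ)) ξ)).re := by
  have hi : Integrable fun ξ : E2 =>
      Complex.exp (2 * (π : ℂ) * Complex.I * (⟪ξ, y⟫ : ℝ)) * hat φ ξ := by
    refine (hat φ).integrable.bdd_mul (c := 1) ?_ (Filter.Eventually.of_forall fun ξ => ?_)
    · exact Continuous.aestronglyMeasurable (by fun_prop)
    · rw [Complex.norm_exp]; simp
  have := integral_FT2inv_re_mul hi hP
  simp only [FT2inv_modulate, FT2inv_hat, Complex.ofReal_re] at this
  simpa only [mul_assoc] using this

/-- If the correlation of `φ` and `P` is maximal at the zero shift, then the spectral density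
pairs nonnegatively with the multiplier `1 - cos (2π⟨ξ, y⟩)` of the symmetric difference
`φ - (φ(· + y) + φ(· - y)) / 2`. -/
lemma integral_one_sub_cos_nonneg (φ : 𝓢(E2, ℝ)) {P : E2 → ℝ} (hP : Integrable P)
    (hmax : ∀ y, ∫ x, φ (x + y) * P x ≤ ∫ x, φ x * P x) (y : E2) :
    0 ≤ ∫ ξ : E2, (1 - Real.cos ⟪(2 * π) • ξ, y⟫) * pairDensity φ P ξ := by
  have hK := integrable_pairDensity φ hP
  have hc : Integrable fun ξ : E2 => Real.cos ⟪(2 * π) • ξ, y⟫ * pairDensity φ P ξ :=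
    hK.bdd_mul (c := 1) (Continuous.aestronglyMeasurable (by fun_prop))
      (Filter.Eventually.of_forall fun ξ => Real.abs_cos_le_one _)
  have hi : ∀ y : E2, Integrable fun ξ : E2 =>
      (Complex.exp (2 * (π : ℂ) * Complex.I * (⟪ξ, y⟫ : ℝ)) *
      (hat φ ξ * FT2inv (fun x => (P x : ℂ)) ξ)).re := by
    intro y
    have hcont := continuous_FT2inv (hP.ofReal (𝕜 := ℂ))
    have h2 := (hat φ).continuous
    refine ((hat φ).integrable.norm.mul_const (∫ x, ‖(P x : ℂ)‖)).mono' ?_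
      (Filter.Eventually.of_forall fun ξ => ?_)
    · exact Continuous.aestronglyMeasurable (by fun_prop)
    · refine (Complex.abs_re_le_norm _).trans ?_
      rw [norm_mul, norm_mul, Complex.norm_exp]
      simp only [Complex.mul_re, Complex.mul_im, Complex.ofReal_re, Complex.ofReal_im,
        Complex.I_re, Complex.I_im]
      norm_num
      gcongr
      simpa using norm_FT2inv_le (fun x => (P x : ℂ)) ξ
  have h0 : ∫ x, φ x * P x = ∫ ξ, pairDensity φ P ξ := by
    simpa [pairDensity] using integral_translate_mul φ hP 0
  have hsum : (∫ x, φ (x + y) * P x) + ∫ x, φ (x + -y) * P x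
      = 2 * ∫ ξ : E2, Real.cos ⟪(2 * π) • ξ, y⟫ * pairDensity φ P ξ := by
    rw [integral_translate_mul φ hP, integral_translate_mul φ hP, ← integral_add (hi _) (hi _),
      ← integral_const_mul]
    congr 1; ext ξ
    have e1 : (2 * (π : ℂ) * Complex.I * (⟪ξ, y⟫ : ℝ))
        = ((⟪(2 * π) • ξ, y⟫ : ℝ) : ℂ) * Complex.I := by
      rw [real_inner_smul_left]; push_cast; ring
    have e2 : (2 * (π : ℂ) * Complex.I * (⟪ξ, -y⟫ : ℝ))
        = ((-⟪(2 * π) • ξ, y⟫ : ℝ) : ℂ) * Complex.I := by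
      rw [real_inner_smul_left, inner_neg_right]; push_cast; ring
    rw [e1, e2, Complex.mul_re (Complex.exp _), Complex.mul_re (Complex.exp _), Complex.exp_ofReal_mul_I_re,
      Complex.exp_ofReal_mul_I_re, Complex.exp_ofReal_mul_I_im, Complex.exp_ofReal_mul_I_im,
      Real.cos_neg, Real.sin_neg, pairDensity]
    ring
  have : ∫ ξ : E2, (1 - Real.cos ⟪(2 * π) • ξ, y⟫) * pairDensity φ P ξ
      = (∫ ξ, pairDensity φ P ξ) - ∫ ξ : E2, Real.cos ⟪(2 * π) • ξ, y⟫ * pairDensity φ P ξ := by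
    rw [← integral_sub hK hc]
    congr 1; ext ξ; ring
  rw [this]
  linarith [hmax y, hmax (-y)]

lemma integral_rpow_pairDensity_nonneg_of_lt_one {α : ℝ} (hα : α ∈ Ioo (0 : ℝ) 1)
    (φ : 𝓢(E2, ℝ)) {P : E2 → ℝ} (hP : Integrable P)
    (hmax : ∀ y, ∫ x, φ (x + y) * P x ≤ ∫ x, φ x * P x) :
    0 ≤ ∫ ξ : E2, (2 * π * ‖ξ‖) ^ (2 * α) * pairDensity φ P ξ := by
  have hKc := continuous_pairDensity φ hP
  have hn : ∀ ξ : E2, ‖(2 * π) • ξ‖ = 2 * π * ‖ξ‖ := fun ξ => by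
    rw [norm_smul, Real.norm_of_nonneg (by positivity)]
  have hint : Integrable (Function.uncurry fun (ξ y : E2) =>
      ((1 - Real.cos ⟪(2 * π) • ξ, y⟫) * ‖y‖ ^ (-(2 + 2 * α))) * pairDensity φ P ξ)
      (volume.prod volume) := by
    have hmaj := ((integrable_weight_pairDensity φ hP).mul_prod (integrable_levyMaj hα)).const_mul 2
    refine hmaj.mono' ?_ (Filter.Eventually.of_forall fun p => ?_)
    · have : Measurable (pairDensity φ P) := hKc.measurable
      exact Measurable.aestronglyMeasurable (by unfold Function.uncurry; fun_prop)
    · obtain ⟨ξ, y⟩ := p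
      simp only [Function.uncurry_apply_pair]
      rw [norm_mul]
      have h1 := norm_levyIntegrand_le α ((2 * π) • ξ) y
      rw [hn] at h1
      have h2 : (2 + (2 * π * ‖ξ‖) ^ 2) * levyMaj α y
          ≤ 2 * (1 + (2 * π * ‖ξ‖) ^ 2) * levyMaj α y := by
        have := levyMaj_nonneg α y
        gcongr
        nlinarith [sq_nonneg (2 * π * ‖ξ‖)]
      calc _ ≤ (2 * (1 + (2 * π * ‖ξ‖) ^ 2) * levyMaj α y) * ‖pairDensity φ P ξ‖ := by
            gcongr; exact h1.trans h2
        _ = _ := by ring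
  have hswap := integral_integral_swap hint
  have hleft : ∀ ξ : E2, ∫ y : E2,
      ((1 - Real.cos ⟪(2 * π) • ξ, y⟫) * ‖y‖ ^ (-(2 + 2 * α))) * pairDensity φ P ξ
      = levy α (EuclideanSpace.single 0 1) * ((2 * π * ‖ξ‖) ^ (2 * α) * pairDensity φ P ξ) := by
    intro ξ
    rw [integral_mul_const]
    change levy α ((2 * π) • ξ) * _ = _
    rw [levy_eq hα, hn]
    ring
  simp only [hleft] at hswap
  rw [integral_const_mul] at hswap
  refine nonneg_of_mul_nonneg_right (a := levy α (EuclideanSpace.single 0 1)) ?_ (levy_single_pos hα)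
  rw [hswap]
  refine integral_nonneg fun y => ?_
  have : ∫ ξ : E2, ((1 - Real.cos ⟪(2 * π) • ξ, y⟫) * ‖y‖ ^ (-(2 + 2 * α))) * pairDensity φ P ξ
      = ‖y‖ ^ (-(2 + 2 * α)) *
        ∫ ξ : E2, (1 - Real.cos ⟪(2 * π) • ξ, y⟫) * pairDensity φ P ξ := by
    rw [← integral_const_mul]
    congr 1; ext ξ; ring
  simp only [Pi.zero_apply]
  rw [this]
  exact mul_nonneg (by positivity) (integral_one_sub_cos_nonneg φ hP hmax y)

/-- The endpoint `α = 1` follows from `α < 1` by continuity in the exponent. -/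
lemma integral_rpow_pairDensity_nonneg {α : ℝ} (hα : α ∈ Ioc (0 : ℝ) 1)
    (φ : 𝓢(E2, ℝ)) {P : E2 → ℝ} (hP : Integrable P)
    (hmax : ∀ y, ∫ x, φ (x + y) * P x ≤ ∫ x, φ x * P x) :
    0 ≤ ∫ ξ : E2, (2 * π * ‖ξ‖) ^ (2 * α) * pairDensity φ P ξ := by
  have hmem : ∀ᶠ β in 𝓝[<] α, β ∈ Ioo (0 : ℝ) α := Ioo_mem_nhdsLT hα.1
  have hlim : Filter.Tendsto (fun β => ∫ ξ : E2, (2 * π * ‖ξ‖) ^ (2 * β) * pairDensity φ P ξ)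
      (𝓝[<] α) (𝓝 (∫ ξ : E2, (2 * π * ‖ξ‖) ^ (2 * α) * pairDensity φ P ξ)) := by
    refine tendsto_integral_filter_of_dominated_convergence _
      (Filter.Eventually.of_forall fun β => ?_) ?_ (integrable_weight_pairDensity φ hP)
      (Filter.Eventually.of_forall fun ξ => ?_)
    · have : Measurable (pairDensity φ P) := (continuous_pairDensity φ hP).measurable
      exact Measurable.aestronglyMeasurable (by fun_prop)
    · filter_upwards [hmem] with β hβ
      refine Filter.Eventually.of_forall fun ξ => ?_
      have h0 : 0 ≤ 2 * π * ‖ξ‖ := by positivity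
      rw [norm_mul, Real.norm_of_nonneg (by positivity)]
      gcongr
      exact rpow_le_one_add_sq h0 (by linarith [hβ.1]) (by linarith [hβ.2, hα.2])
    · refine Filter.Tendsto.mono_left ?_ nhdsWithin_le_nhds
      have h1 : ContinuousAt (fun b : ℝ => (2 * π * ‖ξ‖) ^ b) (2 * α) :=
        Real.continuousAt_const_rpow' (by linarith [hα.1])
      have h2 : ContinuousAt (fun β : ℝ => 2 * β) α := by fun_prop
      exact ((h1.comp (f := fun β : ℝ => 2 * β) h2).mul continuousAt_const :)
  refine ge_of_tendsto hlim ?_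
  filter_upwards [hmem] with β hβ
  exact integral_rpow_pairDensity_nonneg_of_lt_one ⟨hβ.1, hβ.2.trans_le hα.2⟩ φ hP hmax

lemma integral_fracLap_mul_nonneg {α : ℝ} (hα : α ∈ Ioc (0 : ℝ) 1)
    (φ : 𝓢(E2, ℝ)) {P : E2 → ℝ} (hP : Integrable P)
    (hmax : ∀ y, ∫ x, φ (x + y) * P x ≤ ∫ x, φ x * P x) :
    0 ≤ ∫ x, fracLap α φ x * P x := by
  simp only [fracLap, FT2_eq_hat]
  rw [integral_FT2inv_re_mul (integrable_fracSymbol_mul_hat hα φ) hP]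
  convert integral_rpow_pairDensity_nonneg hα φ hP hmax using 2
  ext ξ
  rw [mul_assoc, Complex.re_ofReal_mul, pairDensity]

/-! ### The dual power and the sign of the energy production -/

/-- The dual power `|φ|^(q-2) φ`, which is `1/q` times the derivative of `s ↦ |s|^q` at `φ`. -/
def dualPow (q : ℝ) (φ : E2 → ℝ) (x : E2) : ℝ := |φ x| ^ (q - 2) * φ x

lemma abs_rpow_eq {q : ℝ} (hq : 2 ≤ q) (b : ℝ) : |b| ^ q = |b| ^ (q - 2) * b * b := by
  have := Real.rpow_add_of_nonneg (abs_nonneg b) (y := q - 2) (z := 2) (by linarith) (by norm_num)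
  rw [sub_add_cancel, Real.rpow_two, sq_abs] at this
  rw [this]; ring

lemma mul_dualPow_le {q : ℝ} (hq : 2 ≤ q) (a b : ℝ) :
    a * (|b| ^ (q - 2) * b) ≤ |a| ^ q / q + (1 - 1 / q) * |b| ^ q := by
  have hq0 : 0 < q := by linarith
  have hc : q.HolderConjugate (q / (q - 1)) := Real.HolderConjugate.conjExponent (by linarith)
  have h1 := Real.young_inequality_of_nonneg (abs_nonneg a)
    (Real.rpow_nonneg (abs_nonneg b) (q - 1)) hc
  have h2 : (|b| ^ (q - 1)) ^ (q / (q - 1)) = |b| ^ q := by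
    rw [← Real.rpow_mul (abs_nonneg b)]
    congr 1
    have : q - 1 ≠ 0 := by linarith
    field_simp
  have h3 : a * (|b| ^ (q - 2) * b) ≤ |a| * |b| ^ (q - 1) := by
    refine (le_abs_self _).trans_eq ?_
    have := Real.rpow_add_of_nonneg (abs_nonneg b) (y := q - 2) (z := 1) (by linarith) (by norm_num)
    rw [show q - 2 + 1 = q - 1 by ring, Real.rpow_one] at this
    rw [this, abs_mul, abs_mul, abs_of_nonneg (Real.rpow_nonneg (abs_nonneg b) _)]
  rw [h2] at h1
  have h4 : |b| ^ q / (q / (q - 1)) = (1 - 1 / q) * |b| ^ q := by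
    field_simp
  linarith

lemma integrable_dualPow {q : ℝ} (hq : 2 ≤ q) (φ : 𝓢(E2, ℝ)) : Integrable (dualPow q φ) := by
  refine φ.integrable.bdd_mul (c := (SchwartzMap.seminorm ℝ 0 0 φ) ^ (q - 2)) ?_
    (Filter.Eventually.of_forall fun x => ?_)
  · exact (φ.continuous.abs.rpow_const fun x => Or.inr (by linarith)).aestronglyMeasurable
  · rw [Real.norm_of_nonneg (by positivity)]
    exact Real.rpow_le_rpow (abs_nonneg _) (SchwartzMap.norm_le_seminorm ℝ φ x) (by linarith)

lemma integrable_abs_rpow {q : ℝ} (hq : 2 ≤ q) (φ : 𝓢(E2, ℝ)) :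
    Integrable fun x => |φ x| ^ q := by
  simp only [abs_rpow_eq hq]
  exact (integrable_dualPow hq φ).mul_bdd (c := SchwartzMap.seminorm ℝ 0 0 φ)
    φ.continuous.aestronglyMeasurable
    (Filter.Eventually.of_forall fun x => SchwartzMap.norm_le_seminorm ℝ φ x)

/-- Young's inequality and translation invariance: the correlation of `φ` with `|φ|^(q-2) φ` is
maximal at the zero shift. -/
lemma integral_translate_mul_dualPow_le {q : ℝ} (hq : 2 ≤ q) (φ : 𝓢(E2, ℝ)) (y : E2) :
    ∫ x, φ (x + y) * dualPow q φ x ≤ ∫ x, φ x * dualPow q φ x := by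
  have hG := integrable_abs_rpow hq φ
  have hGy : Integrable fun x => |φ (x + y)| ^ q := hG.comp_add_right y
  have e1 : ∫ x, φ x * dualPow q φ x = ∫ x, |φ x| ^ q := by
    congr 1; ext x
    rw [abs_rpow_eq hq, dualPow]; ring
  have e2 : ∫ x, |φ (x + y)| ^ q = ∫ x, |φ x| ^ q :=
    integral_add_right_eq_self (fun x => |φ x| ^ q) y
  calc ∫ x, φ (x + y) * dualPow q φ x
      ≤ ∫ x, (|φ (x + y)| ^ q / q + (1 - 1 / q) * |φ x| ^ q) := by
        refine integral_mono ?_ ((hGy.div_const q).add (hG.const_mul _))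
          fun x => mul_dualPow_le hq _ _
        exact (integrable_dualPow hq φ).bdd_mul (c := SchwartzMap.seminorm ℝ 0 0 φ)
          (φ.continuous.comp (continuous_add_const y)).aestronglyMeasurable
          (Filter.Eventually.of_forall fun x => SchwartzMap.norm_le_seminorm ℝ φ _)
    _ = ∫ x, φ x * dualPow q φ x := by
        rw [integral_add (hGy.div_const q) (hG.const_mul _), integral_div, integral_const_mul,
          e1, e2]
        have : q ≠ 0 := by linarith
        field_simp
        ring

lemma hasFDerivAt_abs_rpow_comp {q : ℝ} (hq : 2 ≤ q) (φ : 𝓢(E2, ℝ)) (x : E2) :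
    HasFDerivAt (fun x => |φ x| ^ q) ((q * dualPow q φ x) • fderiv ℝ φ x) x := by
  have h := (hasDerivAt_abs_rpow (φ x) (p := q) (by linarith)).comp_hasFDerivAt x
    φ.differentiableAt.hasFDerivAt
  simpa only [dualPow, mul_assoc] using! h

lemma integrable_fderiv_abs_rpow {q : ℝ} (hq : 2 ≤ q) (φ : 𝓢(E2, ℝ)) :
    Integrable (fderiv ℝ fun x => |φ x| ^ q) := by
  have he : (fderiv ℝ fun x => |φ x| ^ q) = fun x => (q * dualPow q φ x) • fderiv ℝ φ x :=
    funext fun x => (hasFDerivAt_abs_rpow_comp hq φ x).fderiv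
  have hm : AEStronglyMeasurable (fderiv ℝ φ) (volume : Measure E2) :=
    ((φ.smooth 1).continuous_fderiv one_ne_zero).aestronglyMeasurable
  rw [he]
  refine (((integrable_dualPow hq φ).norm.const_mul q).mul_const
    (SchwartzMap.seminorm ℝ 0 0 (SchwartzMap.fderivCLM ℝ E2 ℝ φ))).mono'
    (((integrable_dualPow hq φ).const_mul q).aestronglyMeasurable.smul hm)
    (Filter.Eventually.of_forall fun x => ?_)
  rw [norm_smul, norm_mul, Real.norm_of_nonneg (by linarith : 0 ≤ q)]
  gcongr
  exact SchwartzMap.norm_le_seminorm ℝ (SchwartzMap.fderivCLM ℝ E2 ℝ φ) x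

/-- The energy production `q ∫ |φ|^(q-2) φ ψ`, with `ψ` the time derivative prescribed by the
equation for the profile `φ`, is nonpositive: the transport term
contributes zero, the dissipation has a sign. -/
lemma integral_dualPow_mul_nonpos {κ α q : ℝ} (hκ : 0 < κ) (hα : α ∈ Ioc (0 : ℝ) 1) (hq : 2 ≤ q)
    (φ : 𝓢(E2, ℝ)) (ψ : E2 → ℝ)
    (heq : ∀ x, ψ x - riesz 1 φ x * fderiv ℝ φ x (EuclideanSpace.single 0 1)
        + riesz 0 φ x * fderiv ℝ φ x (EuclideanSpace.single 1 1) + κ * fracLap α φ x = 0) :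
    ∫ x, q * dualPow q φ x * ψ x ≤ 0 := by
  set G : E2 → ℝ := fun x => |φ x| ^ q
  have hGd : Differentiable ℝ G := fun x => (hasFDerivAt_abs_rpow_comp hq φ x).differentiableAt
  have hG' : Integrable (fderiv ℝ G) := integrable_fderiv_abs_rpow hq φ
  have hfd : ∀ x v, fderiv ℝ G x v = q * dualPow q φ x * fderiv ℝ φ x v := fun x v => by
    rw [(hasFDerivAt_abs_rpow_comp hq φ x).fderiv]; rfl
  have hi : ∀ i j : Fin 2,
      Integrable fun x => riesz i φ x * fderiv ℝ G x (EuclideanSpace.single j 1) := fun i j => by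
    obtain ⟨C, hC⟩ := exists_bound_riesz i φ
    exact (hG'.apply_continuousLinearMap _).bdd_mul
      (continuous_riesz i φ).aestronglyMeasurable (Filter.Eventually.of_forall hC)
  have hL : Integrable fun x => fracLap α φ x * dualPow q φ x := by
    obtain ⟨C, hC⟩ := exists_bound_fracLap α φ
    exact (integrable_dualPow hq φ).bdd_mul
      (continuous_fracLap hα φ).aestronglyMeasurable (Filter.Eventually.of_forall hC)
  have hpt : ∀ x, q * dualPow q φ x * ψ x =
      riesz 1 φ x * fderiv ℝ G x (EuclideanSpace.single 0 1)
        - riesz 0 φ x * fderiv ℝ G x (EuclideanSpace.single 1 1)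
        - q * κ * (fracLap α φ x * dualPow q φ x) := fun x => by
    rw [hfd, hfd]
    linear_combination (q * dualPow q φ x) * heq x
  simp only [hpt]
  rw [integral_sub (by exact (hi 1 0).sub (hi 0 1)) (hL.const_mul _), integral_sub (hi 1 0) (hi 0 1),
    integral_riesz_transport φ (integrable_abs_rpow hq φ) hGd hG', sub_self, zero_sub,
    integral_const_mul, neg_nonpos]
  exact mul_nonneg (by positivity) (integral_fracLap_mul_nonneg hα φ (integrable_dualPow hq φ)
    (integral_translate_mul_dualPow_le hq φ))

/-! ### Uniform decay in time and the maximum principle -/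

/-- A continuous curve in the Schwartz space decays uniformly on compact time intervals; the
exponent `3` exceeds the dimension. -/
lemma exists_uniform_decay {θ : ℝ → 𝓢(E2, ℝ)} (hθ : Continuous θ) (T : ℝ) :
    ∃ C, 0 ≤ C ∧ ∀ s ∈ Icc 0 T, ∀ x, |θ s x| ≤ C * (1 + ‖x‖) ^ (-3 : ℝ) := by
  have hp : ∀ k : ℕ, Continuous fun s => SchwartzMap.seminorm ℝ k 0 (θ s) := fun k =>
    ((schwartz_withSeminorms ℝ E2 ℝ).continuous_seminorm (k, 0)).comp hθ
  obtain ⟨C, hC⟩ := isCompact_Icc.exists_bound_of_continuousOn (s := Icc 0 T)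
    ((hp 0).add (hp 3)).continuousOn
  refine ⟨4 * |C|, by positivity, fun s hs x => ?_⟩
  have h0 := SchwartzMap.norm_pow_mul_le_seminorm ℝ (θ s) 0 x
  have h3 := SchwartzMap.norm_pow_mul_le_seminorm ℝ (θ s) 3 x
  have hb : SchwartzMap.seminorm ℝ 0 0 (θ s) + SchwartzMap.seminorm ℝ 3 0 (θ s) ≤ |C| :=
    (le_abs_self _).trans ((hC s hs).trans (le_abs_self C))
  rw [Real.rpow_neg (by positivity), ← div_eq_mul_inv, le_div_iff₀ (by positivity)]
  norm_cast
  rw [Real.norm_eq_abs] at h0 h3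
  rw [pow_zero, one_mul] at h0
  have hx := norm_nonneg x
  have hcube : (1 + ‖x‖) ^ 3 ≤ 4 * (1 + ‖x‖ ^ 3) := by
    nlinarith [mul_nonneg (add_nonneg zero_le_one hx) (sq_nonneg (1 - ‖x‖))]
  calc |θ s x| * (1 + ‖x‖) ^ 3 ≤ |θ s x| * (4 * (1 + ‖x‖ ^ 3)) := by gcongr
    _ ≤ 4 * |C| := by linarith

lemma integrable_decay : Integrable fun x : E2 => (1 + ‖x‖) ^ (-3 : ℝ) :=
  integrable_one_add_norm (by rw [finrank_euclideanSpace_fin]; norm_num)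

lemma decay_le_one (x : E2) : (1 + ‖x‖) ^ (-3 : ℝ) ≤ 1 :=
  Real.rpow_le_one_of_one_le_of_nonpos (by linarith [norm_nonneg x]) (by norm_num)

/-- **Maximum principle, homogeneous case.**
If `θ` is a regular (Schwartz-class, C¹ in time) solution of
`θ_t + u·∇θ + κ(-Δ)^α θ = 0` on `ℝ²` with `u = (-R₂θ, R₁θ)`, `κ > 0`, `α ∈ (0,1]`,
then for all `t ≥ 0` and `q ∈ [2,∞)`, `‖θ(t)‖_{L^q} ≤ ‖θ(0)‖_{L^q}`. -/
theorem maximum_principle_homogeneous_QG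
    (κ α q : ℝ) (hκ : 0 < κ) (hα : α ∈ Set.Ioc (0:ℝ) 1) (hq : 2 ≤ q)
    (θ dθ : ℝ → SchwartzMap (EuclideanSpace ℝ (Fin 2)) ℝ)
    (hθcont : Continuous θ) (hdθcont : Continuous dθ)
    (hderiv : ∀ t, 0 ≤ t → ∀ x, HasDerivAt (fun s => θ s x) (dθ t x) t)
    (heq : ∀ t, 0 ≤ t → ∀ x,
      dθ t x
        - riesz 1 (θ t) x * fderiv ℝ (θ t) x (EuclideanSpace.single 0 1)
        + riesz 0 (θ t) x * fderiv ℝ (θ t) x (EuclideanSpace.single 1 1)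
        + κ * fracLap α (θ t) x = 0)
    (t : ℝ) (ht : 0 ≤ t) :
    eLpNorm (θ t) (ENNReal.ofReal q) volume ≤ eLpNorm (θ 0) (ENNReal.ofReal q) volume := by
  have hq0 : 0 < q := by linarith
  obtain ⟨A, hA0, hA⟩ := exists_uniform_decay hθcont t
  obtain ⟨B, hB0, hB⟩ := exists_uniform_decay hdθcont t
  have hA' : ∀ s ∈ Icc 0 t, ∀ x, |θ s x| ≤ A := fun s hs x =>
    (hA s hs x).trans (mul_le_of_le_one_right hA0 (decay_le_one x))
  have hmeas : ∀ s, AEStronglyMeasurable (fun x => |θ s x| ^ q) volume := fun s =>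
    (integrable_abs_rpow hq (θ s)).aestronglyMeasurable
  set F : ℝ → ℝ := fun s => ∫ x, |θ s x| ^ q with hF
  have hFcont : ContinuousOn F (Icc 0 t) := by
    refine continuousOn_of_dominated (bound := fun x => A ^ (q - 1) * (A * (1 + ‖x‖) ^ (-3 : ℝ)))
      (fun s _ => hmeas s) (fun s hs => Filter.Eventually.of_forall fun x => ?_)
      ((integrable_decay.const_mul A).const_mul _) (Filter.Eventually.of_forall fun x s hs => ?_)
    · rw [Real.norm_of_nonneg (by positivity)]
      have h := Real.rpow_add_of_nonneg (abs_nonneg (θ s x)) (y := q - 1) (z := 1)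
        (by linarith) (by norm_num)
      rw [sub_add_cancel, Real.rpow_one] at h
      rw [h]
      gcongr
      · linarith
      · exact hA' s hs x
      · exact hA s hs x
    · exact ((hderiv s hs.1 x).continuousAt.abs.rpow_const (Or.inr hq0.le)).continuousWithinAt
  have hFderiv : ∀ s ∈ Ioo 0 t, HasDerivAt F (∫ x, q * dualPow q (θ s) x * dθ s x) s := by
    intro s hs
    refine (hasDerivAt_integral_of_dominated_loc_of_deriv_le (s := Ioo 0 t)
      (F := fun r x => |θ r x| ^ q) (F' := fun r x => q * dualPow q (θ r) x * dθ r x)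
      (bound := fun x => q * (A ^ (q - 2) * A) * (B * (1 + ‖x‖) ^ (-3 : ℝ)))
      (Ioo_mem_nhds hs.1 hs.2) (Filter.Eventually.of_forall hmeas) (integrable_abs_rpow hq (θ s))
      ?_ (Filter.Eventually.of_forall fun x r hr => ?_)
      ((integrable_decay.const_mul B).const_mul _)
      (Filter.Eventually.of_forall fun x r hr => ?_)).2
    · exact ((integrable_dualPow hq (θ s)).const_mul q).aestronglyMeasurable.mul
        (dθ s).continuous.aestronglyMeasurable
    · have hr' := Ioo_subset_Icc_self hr
      rw [dualPow, norm_mul, norm_mul, norm_mul, Real.norm_of_nonneg hq0.le,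
        Real.norm_of_nonneg (Real.rpow_nonneg (abs_nonneg _) _)]
      have h1 : |θ r x| ^ (q - 2) ≤ A ^ (q - 2) :=
        Real.rpow_le_rpow (abs_nonneg _) (hA' r hr' x) (by linarith)
      gcongr
      · exact hA' r hr' x
      · exact hB r hr' x
    · have h := (hasDerivAt_abs_rpow (θ r x) (p := q) (by linarith)).comp r (hderiv r hr.1.le x)
      simpa only [dualPow, mul_assoc] using! h
  have hanti : AntitoneOn F (Icc 0 t) := by
    refine antitoneOn_of_deriv_nonpos (convex_Icc 0 t) hFcont ?_ ?_
    · rw [interior_Icc]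
      exact fun s hs => (hFderiv s hs).differentiableAt.differentiableWithinAt
    · rw [interior_Icc]
      intro s hs
      rw [(hFderiv s hs).deriv]
      exact integral_dualPow_mul_nonpos hκ hα hq (θ s) (dθ s) (heq s hs.1.le)
  have hle : F t ≤ F 0 := hanti ⟨le_rfl, ht⟩ ⟨ht, le_rfl⟩ ht
  have hnorm : ∀ s, eLpNorm (θ s) (ENNReal.ofReal q) volume = ENNReal.ofReal (F s ^ q⁻¹) := by
    intro s
    rw [((θ s).memLp (ENNReal.ofReal q) volume).eLpNorm_eq_integral_rpow_norm
      (by simpa using hq0) ENNReal.ofReal_ne_top, ENNReal.toReal_ofReal hq0.le]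
    rfl
  rw [hnorm, hnorm]
  refine ENNReal.ofReal_le_ofReal (Real.rpow_le_rpow ?_ hle (by positivity))
  exact integral_nonneg fun x => by positivity

end
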